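/- For every qubit strategy for the (2,3) REC in which both decoding POVMs are effectively two-outcome, i.e. M₁₂ = 0 and M₂₂ = 0, the average exclusion success probability satisfies p(REC) ≤ (7+√2)/9. -/

import Mathlib

/-!
Write a Hermitian `2 × 2` matrix as `A = (s I + a · σ) / 2` with `s = tr A` and Bloch vector `a`.
Then `Tr (A B) = (s s' + a · b) / 2`, and positivity of `A` gives `‖a‖ ≤ s`; so a state has
`‖r‖ ≤ 1`, and so has an effect `P` with `0 ≤ P ≤ 1`, because `‖a‖ ≤ min s (2 - s)`.

With binary measurements `{P, 1 - P}` and `{Q, 1 - Q}`, of Bloch vectors `a` and `b`, the failure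
weight of the five input pairs containing a `2` is nonnegative. On the other four pairs it is
`4 + ((a + b) · (r₀₀ - r₁₁) + (a - b) · (r₀₁ - r₁₀)) / 2`. The inequality
`-x · r ≤ √2 / 4 * ‖x‖² + √2 / 2 * ‖r‖²` for each of the four states, together with
`‖a + b‖² + ‖a - b‖² = 2 ‖a‖² + 2 ‖b‖² ≤ 4`, bounds this below by `4 - 2 √2`, which is the claim
(`quarter_bound`).
-/

open Matrix
open scoped ComplexOrder

/-- The states and POVMs form a valid qubit strategy for the `(2,3)` REC/RAC:
the states are positive semidefinite with unit trace, and each of the two decoding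
triples is a POVM. -/
def IsQubitStrategy3 (ρ : Fin 3 → Fin 3 → Matrix (Fin 2) (Fin 2) ℂ)
    (M : Fin 2 → Fin 3 → Matrix (Fin 2) (Fin 2) ℂ) : Prop :=
  (∀ a₁ a₂, (ρ a₁ a₂).PosSemidef ∧ (ρ a₁ a₂).trace = 1) ∧
  (∀ i c, (M i c).PosSemidef) ∧
  (∀ i, ∑ c : Fin 3, M i c = 1)

/-- Average exclusion success probability for the `(2,3)` REC with a qubit strategy. -/
noncomputable def pREC3 (ρ : Fin 3 → Fin 3 → Matrix (Fin 2) (Fin 2) ℂ)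
    (M : Fin 2 → Fin 3 → Matrix (Fin 2) (Fin 2) ℂ) : ℝ :=
  (1 / 18) * ∑ a₁ : Fin 3, ∑ a₂ : Fin 3, ∑ i : Fin 2,
    (((1 - M i (if i = 0 then a₁ else a₂)) * ρ a₁ a₂).trace).re

/-- The Bloch vector of a Hermitian `2 × 2` matrix `A = (tr A • 1 + a · σ) / 2`, up to the sign of
its second coordinate. -/
def bloch (A : Matrix (Fin 2) (Fin 2) ℂ) : Fin 3 → ℝ :=
  ![2 * (A 0 1).re, 2 * (A 0 1).im, (A 0 0).re - (A 1 1).re]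

lemma bloch_one_sub (A : Matrix (Fin 2) (Fin 2) ℂ) : bloch (1 - A) = -bloch A := by
  ext i
  fin_cases i <;> simp [bloch]

lemma trace_mul_re {A B : Matrix (Fin 2) (Fin 2) ℂ} (hA : A.IsHermitian) (hB : B.IsHermitian) :
    (A * B).trace.re = (A.trace.re * B.trace.re + bloch A ⬝ᵥ bloch B) / 2 := by
  have a := hA.apply 0 1
  have b := hB.apply 0 1
  have a0 := congrArg Complex.im (hA.apply 0 0)
  have a1 := congrArg Complex.im (hA.apply 1 1)
  rw [← b] at *
  simp only [Matrix.trace_fin_two, Matrix.mul_apply, Fin.sum_univ_two, bloch, dotProduct,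
    Fin.sum_univ_three]
  rw [← hA.apply 1 0, ← hB.apply 1 0]
  simp at a0 a1 ⊢
  have a0' : (A 0 0).im = 0 := by linarith
  have a1' : (A 1 1).im = 0 := by linarith
  rw [a0', a1']
  ring

lemma bloch_sq_le {A : Matrix (Fin 2) (Fin 2) ℂ} (hA : A.PosSemidef) :
    0 ≤ A.trace.re ∧ bloch A ⬝ᵥ bloch A ≤ A.trace.re ^ 2 := by
  refine ⟨(Complex.le_def.1 hA.trace_nonneg).1, ?_⟩
  have hd := (Complex.le_def.1 hA.det_nonneg).1
  have a0 := congrArg Complex.im (hA.1.apply 0 0)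
  rw [Matrix.det_fin_two, ← hA.1.apply 1 0] at hd
  simp [Matrix.trace_fin_two, bloch, dotProduct, Fin.sum_univ_three] at hd a0 ⊢
  have a0' : (A 0 0).im = 0 := by linarith
  rw [a0'] at hd
  nlinarith

/-- Both `A` and `1 - A` being positive forces the Bloch vector into the unit ball. -/
lemma bloch_effect {A : Matrix (Fin 2) (Fin 2) ℂ} (hA : A.PosSemidef)
    (hA' : (1 - A).PosSemidef) : bloch A ⬝ᵥ bloch A ≤ 1 := by
  obtain ⟨h0, h1⟩ := bloch_sq_le hA
  obtain ⟨h2, h3⟩ := bloch_sq_le hA'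
  rw [bloch_one_sub, neg_dotProduct_neg] at h3
  simp only [Matrix.trace_sub, Matrix.trace_one, Fintype.card_fin, Complex.sub_re] at h2 h3
  norm_num at h2 h3
  rcases le_total A.trace.re 1 with h | h <;> nlinarith

lemma trace_mul_nonneg {A B : Matrix (Fin 2) (Fin 2) ℂ} (hA : A.PosSemidef)
    (hB : B.PosSemidef) : 0 ≤ (A * B).trace.re := by
  obtain ⟨h0, h1⟩ := bloch_sq_le hA
  obtain ⟨h2, h3⟩ := bloch_sq_le hB
  have hcs : (bloch A ⬝ᵥ bloch B) ^ 2 ≤ (bloch A ⬝ᵥ bloch A) * (bloch B ⬝ᵥ bloch B) := by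
    have := Finset.sum_mul_sq_le_sq_mul_sq Finset.univ (bloch A) (bloch B)
    simpa [dotProduct, sq] using this
  have hb : 0 ≤ bloch B ⬝ᵥ bloch B := by
    simpa [dotProduct] using Finset.sum_nonneg fun i _ => mul_self_nonneg (bloch B i)
  have hsq : (bloch A ⬝ᵥ bloch B) ^ 2 ≤ (A.trace.re * B.trace.re) ^ 2 := by
    rw [mul_pow]
    exact hcs.trans (mul_le_mul h1 h3 hb (sq_nonneg _))
  rw [trace_mul_re hA.1 hB.1]
  linarith [(abs_le.1 (abs_le_of_sq_le_sq hsq (mul_nonneg h0 h2))).1]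

/-- Weighted AM-GM; the weights make it an equality when `‖r‖ = 1` and `x = -√2 r`. -/
lemma neg_dot_le (x r : Fin 3 → ℝ) (hr : r ⬝ᵥ r ≤ 1) :
    -(x ⬝ᵥ r) ≤ √2 / 4 * (x ⬝ᵥ x) + √2 / 2 := by
  have h2 : √2 * √2 = 2 := Real.mul_self_sqrt (by norm_num)
  have key : 0 ≤ (x + √2 • r) ⬝ᵥ (x + √2 • r) := by
    simpa [dotProduct] using Finset.sum_nonneg fun i _ => mul_self_nonneg ((x + √2 • r) i)
  simp only [add_dotProduct, dotProduct_add, smul_dotProduct, dotProduct_smul, smul_eq_mul] at key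
  rw [dotProduct_comm r x] at key
  have hs : 0 < √2 := by positivity
  have key' : 0 ≤ √2 / 4 * (x ⬝ᵥ x) + x ⬝ᵥ r + √2 / 2 * (r ⬝ᵥ r) := by
    refine (mul_nonneg (by positivity : 0 ≤ √2 / 4) key).trans_eq ?_
    linear_combination (x ⬝ᵥ r / 2 + √2 / 4 * (r ⬝ᵥ r)) * h2
  have := mul_le_mul_of_nonneg_left hr (by positivity : 0 ≤ √2 / 2)
  linarith

/-- The failure weight of the four input pairs in `{0, 1}²`. -/
lemma quarter_bound {P Q R S T U : Matrix (Fin 2) (Fin 2) ℂ}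
    (hP : P.PosSemidef) (hP' : (1 - P).PosSemidef) (hQ : Q.PosSemidef) (hQ' : (1 - Q).PosSemidef)
    (hR : R.PosSemidef ∧ R.trace = 1) (hS : S.PosSemidef ∧ S.trace = 1)
    (hT : T.PosSemidef ∧ T.trace = 1) (hU : U.PosSemidef ∧ U.trace = 1) :
    4 - 2 * √2 ≤
      ((P * R).trace.re + (Q * R).trace.re) + ((P * S).trace.re + ((1 - Q) * S).trace.re)
      + (((1 - P) * T).trace.re + (Q * T).trace.re)
      + (((1 - P) * U).trace.re + ((1 - Q) * U).trace.re) := by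
  have st : ∀ {X : Matrix (Fin 2) (Fin 2) ℂ}, X.PosSemidef ∧ X.trace = 1 →
      bloch X ⬝ᵥ bloch X ≤ 1 := fun hX => by
    simpa [hX.2] using (bloch_sq_le hX.1).2
  have eP := bloch_effect hP hP'
  have eQ := bloch_effect hQ hQ'
  have k1 := neg_dot_le (bloch P + bloch Q) _ (st hR)
  have k2 := neg_dot_le (bloch P - bloch Q) _ (st hS)
  have k3 := neg_dot_le (-bloch P + bloch Q) _ (st hT)
  have k4 := neg_dot_le (-bloch P - bloch Q) _ (st hU)
  rw [trace_mul_re hP.1 hR.1.1, trace_mul_re hQ.1 hR.1.1, trace_mul_re hP.1 hS.1.1,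
    trace_mul_re hQ'.1 hS.1.1, trace_mul_re hP'.1 hT.1.1, trace_mul_re hQ.1 hT.1.1,
    trace_mul_re hP'.1 hU.1.1, trace_mul_re hQ'.1 hU.1.1, hR.2, hS.2, hT.2, hU.2]
  simp only [bloch_one_sub, Matrix.trace_sub, Matrix.trace_one, Fintype.card_fin, Complex.sub_re,
    Complex.one_re, mul_one, add_dotProduct, dotProduct_add, sub_dotProduct, dotProduct_sub,
    neg_dotProduct, dotProduct_neg] at *
  norm_num at *
  have hs : 0 < √2 := by positivity
  nlinarith [mul_le_mul_of_nonneg_left eP hs.le, mul_le_mul_of_nonneg_left eQ hs.le]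

theorem stmt4 (ρ : Fin 3 → Fin 3 → Matrix (Fin 2) (Fin 2) ℂ)
    (M : Fin 2 → Fin 3 → Matrix (Fin 2) (Fin 2) ℂ)
    (h : IsQubitStrategy3 ρ M) (h12 : M 0 2 = 0) (h22 : M 1 2 = 0) :
    pREC3 ρ M ≤ (7 + Real.sqrt 2) / 9 := by
  obtain ⟨hρ, hM, hs⟩ := h
  have e0 : M 0 1 = 1 - M 0 0 := by
    have := hs 0
    rw [Fin.sum_univ_three, h12, add_zero] at this
    rw [← this, add_sub_cancel_left]
  have e1 : M 1 1 = 1 - M 1 0 := by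
    have := hs 1
    rw [Fin.sum_univ_three, h22, add_zero] at this
    rw [← this, add_sub_cancel_left]
  have key := quarter_bound (hM 0 0) (e0 ▸ hM 0 1) (hM 1 0) (e1 ▸ hM 1 1)
    (hρ 0 0) (hρ 0 1) (hρ 1 0) (hρ 1 1)
  rw [← e0, ← e1] at key
  have nn : ∀ i c a b, 0 ≤ (M i c * ρ a b).trace.re := fun i c a b =>
    trace_mul_nonneg (hM i c) (hρ a b).1
  have t : ∀ i c a b, ((1 - M i c) * ρ a b).trace.re = 1 - (M i c * ρ a b).trace.re := by
    intro i c a b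
    rw [Matrix.sub_mul, Matrix.one_mul, Matrix.trace_sub, (hρ a b).2, Complex.sub_re,
      Complex.one_re]
  have z : (1 : Fin 2) ≠ 0 := by decide
  simp only [pREC3, t, Fin.sum_univ_three, Fin.sum_univ_two, if_true, if_neg z]
  linarith [nn 0 0 0 2, nn 0 1 1 2, nn 0 2 2 0, nn 0 2 2 1, nn 0 2 2 2, nn 1 2 0 2, nn 1 2 1 2,
    nn 1 0 2 0, nn 1 1 2 1, nn 1 2 2 2]
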